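/- Under the genericity assumptions, for every integer n ≥ 0, all r, s ∈ ℤ, and every z ∈ ℂ the following four third-order pure-offset recurrences hold: η_n^{(r+1)}·P_n(z;r+3) − z·P_n(z;r+2) + δ_n^{(r+1)}·P_n(z;r+1) + z·P_n(z;r) = 0; Q*_n(z;r+3) − Q*_n(z;r+2) + β_n^{(r+1)}·z·Q*_n(z;r+1) + α_n^{(r+1)}·z·Q*_n(z;r) = 0; ρ_n^{(s+2)}·R_n(z;s+3) + κ_n^{(s+2)}·R_n(z;s+2) − z·R_n(z;s+1) + z·R_n(z;s) = 0; and S*_n(z;s+3) + γ_n^{(s+2)}·z·S*_n(z;s+2) − S*_n(z;s+1) + θ_n^{(s+2)}·z·S*_n(z;s) = 0. -/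

import Mathlib

/-! The four recurrences are one identity. For `a b : ℤ` consider the functionals
`z ^ k ↦ w (ρ - a * k)` on polynomials, and let `p_r` be the (unnormalised) polynomial of degree `n`
annihilated by those with `ρ = r, r + b, …, r + (n - 1) * b`, that is, the bordered determinant
whose last row is `(1, z, …, z ^ n)`. Write `G_n^r` for the determinant with entries
`w (r + b * j - a * k)`. Then, as soon as `G_n^r ≠ 0`,

`G_n^r (G_{n+1}^r p_{r+a+b} - z G_{n+1}^{r+a} p_{r+b})
  = G_n^{r+b} (G_{n+1}^r p_{r+a} - z G_{n+1}^{r+a} p_r)`.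

Indeed, multiplication by `z` shifts the index `ρ` of a functional by `a`, so the difference of the
two sides is annihilated by the functionals `r + a + i * b` with `0 < i < n`; the factors
`G_{n+1}` also make it annihilated by the one with `i = 0`, and the factors `G_n` cancel
both its coefficient of `z ^ (n + 1)` and its constant term. So it is `z` times a polynomial of
degree `< n` annihilated by the functionals `r, r + b, …, r + (n - 1) * b`, which vanishes because
`G_n^r ≠ 0`. This is `master`.

The polynomials `P` and `R` are the cases `(a, b) = (1, 2)` and `(2, 1)`. Transposing the
determinants and reversing the order of the powers of `z` shows that `Q*` and `S*` are, up to a sign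
depending only on `n`, the cases `(2, -1)` and `(1, -2)`; there the recurrence index is reversed. -/

/-- The `2j-k` determinant `D_n^{(r)} := det_{0≤j,k≤n-1} (w (r+2j-k))`, with `D_0^{(r)} = 1`. -/
noncomputable def Ddet (w : ℤ → ℂ) (n : ℕ) (r : ℤ) : ℂ :=
  Matrix.det (fun j k : Fin n => w (r + 2 * ((j : ℕ) : ℤ) - ((k : ℕ) : ℤ)))

/-- The monic `2j-k` bi-orthogonal polynomial of the first kind, `P_n(z;r)`. -/
noncomputable def Ppoly (w : ℤ → ℂ) (n : ℕ) (r : ℤ) (z : ℂ) : ℂ :=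
  Matrix.det (fun j k : Fin (n + 1) =>
    if (j : ℕ) < n then w (r + 2 * ((j : ℕ) : ℤ) - ((k : ℕ) : ℤ)) else z ^ (k : ℕ)) /
    Ddet w n r

/-- The monic `2j-k` bi-orthogonal polynomial of the second kind, `Q_n(z;r)`. -/
noncomputable def Qpoly (w : ℤ → ℂ) (n : ℕ) (r : ℤ) (z : ℂ) : ℂ :=
  Matrix.det (fun j k : Fin (n + 1) =>
    if (k : ℕ) < n then w (r + 2 * ((j : ℕ) : ℤ) - ((k : ℕ) : ℤ)) else z ^ (j : ℕ)) /
    Ddet w n r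

/-- The reciprocal polynomial `Q*_n(z;r) = zⁿ·Q_n(1/z;r)`: the last column `z^j` of the
determinant defining `Q_n` is replaced by `z^(n-j)`. -/
noncomputable def Qstar (w : ℤ → ℂ) (n : ℕ) (r : ℤ) (z : ℂ) : ℂ :=
  Matrix.det (fun j k : Fin (n + 1) =>
    if (k : ℕ) < n then w (r + 2 * ((j : ℕ) : ℤ) - ((k : ℕ) : ℤ)) else z ^ (n - (j : ℕ))) /
    Ddet w n r

/-- The norm `h_n^{(r)} = D_{n+1}^{(r)}/D_n^{(r)}`. -/
noncomputable def hnorm (w : ℤ → ℂ) (n : ℕ) (r : ℤ) : ℂ := Ddet w (n + 1) r / Ddet w n r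

/-- The recurrence coefficient `δ_n^{(r)} = -h_n^{(r-1)}/h_n^{(r)}`. -/
noncomputable def δc (w : ℤ → ℂ) (n : ℕ) (r : ℤ) : ℂ := -hnorm w n (r - 1) / hnorm w n r

/-- The recurrence coefficient `η_n^{(r)} = D_n^{(r+2)}D_{n+1}^{(r-1)}/(D_{n+1}^{(r)}D_n^{(r+1)})`. -/
noncomputable def ηc (w : ℤ → ℂ) (n : ℕ) (r : ℤ) : ℂ :=
  Ddet w n (r + 2) * Ddet w (n + 1) (r - 1) / (Ddet w (n + 1) r * Ddet w n (r + 1))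

/-- The recurrence coefficient `β_n^{(r)} = -h_n^{(r+2)}/h_n^{(r)}`. -/
noncomputable def βc (w : ℤ → ℂ) (n : ℕ) (r : ℤ) : ℂ := -hnorm w n (r + 2) / hnorm w n r

/-- The recurrence coefficient `α_n^{(r)} = D_n^{(r-1)}D_{n+1}^{(r+2)}/(D_{n+1}^{(r)}D_n^{(r+1)})`. -/
noncomputable def αc (w : ℤ → ℂ) (n : ℕ) (r : ℤ) : ℂ :=
  Ddet w n (r - 1) * Ddet w (n + 1) (r + 2) / (Ddet w (n + 1) r * Ddet w n (r + 1))

/-- The `j-2k` determinant `E_n^{(s)} := det_{0≤j,k≤n-1} (w (s+j-2k))`, with `E_0^{(s)} = 1`. -/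
noncomputable def Edet (w : ℤ → ℂ) (n : ℕ) (s : ℤ) : ℂ :=
  Matrix.det (fun j k : Fin n => w (s + ((j : ℕ) : ℤ) - 2 * ((k : ℕ) : ℤ)))

/-- The monic `j-2k` bi-orthogonal polynomial of the first kind, `R_n(z;s)`. -/
noncomputable def Rpoly (w : ℤ → ℂ) (n : ℕ) (s : ℤ) (z : ℂ) : ℂ :=
  Matrix.det (fun j k : Fin (n + 1) =>
    if (j : ℕ) < n then w (s + ((j : ℕ) : ℤ) - 2 * ((k : ℕ) : ℤ)) else z ^ (k : ℕ)) /
    Edet w n s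

/-- The monic `j-2k` bi-orthogonal polynomial of the second kind, `S_n(z;s)`. -/
noncomputable def Spoly (w : ℤ → ℂ) (n : ℕ) (s : ℤ) (z : ℂ) : ℂ :=
  Matrix.det (fun j k : Fin (n + 1) =>
    if (k : ℕ) < n then w (s + ((j : ℕ) : ℤ) - 2 * ((k : ℕ) : ℤ)) else z ^ (j : ℕ)) /
    Edet w n s

/-- The reciprocal polynomial `S*_n(z;s) = zⁿ·S_n(1/z;s)`: the last column `z^j` of the
determinant defining `S_n` is replaced by `z^(n-j)`. -/
noncomputable def Sstar (w : ℤ → ℂ) (n : ℕ) (s : ℤ) (z : ℂ) : ℂ :=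
  Matrix.det (fun j k : Fin (n + 1) =>
    if (k : ℕ) < n then w (s + ((j : ℕ) : ℤ) - 2 * ((k : ℕ) : ℤ)) else z ^ (n - (j : ℕ))) /
    Edet w n s

/-- The norm `g_n^{(s)} = E_{n+1}^{(s)}/E_n^{(s)}`. -/
noncomputable def gnorm (w : ℤ → ℂ) (n : ℕ) (s : ℤ) : ℂ := Edet w (n + 1) s / Edet w n s

/-- The recurrence coefficient `κ_n^{(s)} = -g_n^{(s-2)}/g_n^{(s)}`. -/
noncomputable def κc (w : ℤ → ℂ) (n : ℕ) (s : ℤ) : ℂ := -gnorm w n (s - 2) / gnorm w n s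

/-- The recurrence coefficient `ρ_n^{(s)} = E_n^{(s+1)}E_{n+1}^{(s-2)}/(E_{n+1}^{(s)}E_n^{(s-1)})`. -/
noncomputable def ρc (w : ℤ → ℂ) (n : ℕ) (s : ℤ) : ℂ :=
  Edet w n (s + 1) * Edet w (n + 1) (s - 2) / (Edet w (n + 1) s * Edet w n (s - 1))

/-- The recurrence coefficient `γ_n^{(s)} = -g_n^{(s+1)}/g_n^{(s)}`. -/
noncomputable def γc (w : ℤ → ℂ) (n : ℕ) (s : ℤ) : ℂ := -gnorm w n (s + 1) / gnorm w n s

/-- The recurrence coefficient `θ_n^{(s)} = E_n^{(s-2)}E_{n+1}^{(s+1)}/(E_{n+1}^{(s)}E_n^{(s-1)})`. -/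
noncomputable def θc (w : ℤ → ℂ) (n : ℕ) (s : ℤ) : ℂ :=
  Edet w n (s - 2) * Edet w (n + 1) (s + 1) / (Edet w (n + 1) s * Edet w n (s - 1))

namespace OffsetRecurrence

open Matrix

/-! ### Bordered moment determinants -/

/-- The determinant `G_n^r` of the moments `w (r + b * j - a * k)`; both families `D` and `E`
are instances. -/
noncomputable def G (w : ℤ → ℂ) (a b : ℤ) (n : ℕ) (r : ℤ) : ℂ :=
  Matrix.det (Matrix.of fun j k : Fin n => w (r + b * ((j : ℕ) : ℤ) - a * ((k : ℕ) : ℤ)))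

/-- The moment functional with index `ρ`, as its sequence of values on the monomials `z ^ k`. -/
def row (w : ℤ → ℂ) (a : ℤ) (ρ : ℤ) : ℕ → ℂ := fun k => w (ρ - a * (k : ℤ))

/-- The shift of sequences; on the values of a functional it is precomposition with multiplication
by `z`. -/
def shift : (ℕ → ℂ) →ₗ[ℂ] (ℕ → ℂ) where
  toFun v := fun k => v (k + 1)
  map_add' _ _ := rfl
  map_smul' _ _ := rfl

/-- The bordered determinant with moment rows `r, r + b, …, r + (n - 1) * b` and last row `v`, as a
linear functional of `v`. At `v = (1, z, z ^ 2, …)` it is the polynomial `p_r`, and at the values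
of a linear functional on monomials it is the value of that functional on `p_r`. -/
noncomputable def F (w : ℤ → ℂ) (a b : ℤ) (n : ℕ) (r : ℤ) : (ℕ → ℂ) →ₗ[ℂ] ℂ where
  toFun v := Matrix.det (Matrix.updateRow
    (Matrix.of fun j k : Fin (n + 1) => w (r + b * ((j : ℕ) : ℤ) - a * ((k : ℕ) : ℤ)))
    (Fin.last n) (fun k => v k))
  map_add' _ _ := Matrix.det_updateRow_add _ _ _ _
  map_smul' _ _ := Matrix.det_updateRow_smul _ _ _ _

theorem F_apply (w : ℤ → ℂ) (a b : ℤ) (n : ℕ) (r : ℤ) (v : ℕ → ℂ) :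
    F w a b n r v = Matrix.det (Matrix.of fun j k : Fin (n + 1) =>
      if (j : ℕ) < n then w (r + b * ((j : ℕ) : ℤ) - a * ((k : ℕ) : ℤ)) else v k) := by
  change Matrix.det (Matrix.updateRow _ _ _) = _
  congr 1
  ext j k
  rw [Matrix.updateRow_apply]
  have hj := j.isLt
  by_cases h : j = Fin.last n
  · simp [h]
  · have : (j : ℕ) < n := by
      have : (j : ℕ) ≠ n := fun h' => h (Fin.ext h')
      omega
    simp [h, this]

theorem F_row (w : ℤ → ℂ) (a b : ℤ) (n : ℕ) (r ρ : ℤ) (i : ℕ) (hi : i < n) (h : ρ = r + b * i) :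
    F w a b n r (row w a ρ) = 0 := by
  rw [F_apply]
  refine Matrix.det_zero_of_row_eq (i := ⟨i, by omega⟩) (j := Fin.last n) ?_ ?_
  · intro h'
    have := congrArg Fin.val h'
    simp at this
    omega
  · funext k
    simp [hi, row, h]

theorem F_row_pred (w : ℤ → ℂ) (a b : ℤ) (n : ℕ) (r ρ : ℤ) (h : r = ρ + b) :
    F w a b n r (row w a ρ) = (-1) ^ n * G w a b (n + 1) ρ := by
  have key := Matrix.det_permute (finRotate (n + 1))
    (Matrix.of fun j k : Fin (n + 1) => w (ρ + b * ((j : ℕ) : ℤ) - a * ((k : ℕ) : ℤ)))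
  rw [F_apply, G]
  rw [sign_finRotate] at key
  push_cast at key
  rw [← key]
  congr 1
  ext j k
  simp only [Matrix.submatrix_apply, Matrix.of_apply, id]
  have hj := j.isLt
  split_ifs with hlt
  · rw [coe_finRotate_of_ne_last (by intro h'; simp [h'] at hlt)]
    congr 1
    rw [h]; push_cast; ring
  · have : j = Fin.last n := Fin.ext (by simp; omega)
    rw [this, finRotate_last]
    simp [row]

theorem F_single (w : ℤ → ℂ) (a b : ℤ) (n : ℕ) (r : ℤ) (i : Fin (n + 1)) :
    F w a b n r (Pi.single (i : ℕ) 1) = (-1) ^ (n + (i : ℕ)) *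
      Matrix.det (Matrix.of fun j k : Fin n =>
        w (r + b * ((j : ℕ) : ℤ) - a * (((i.succAbove k : Fin (n + 1)) : ℕ) : ℤ))) := by
  rw [F_apply, Matrix.det_succ_row _ (Fin.last n), Finset.sum_eq_single i]
  · simp only [Fin.val_last, Matrix.of_apply, lt_irrefl, if_false, Pi.single_eq_same, mul_one]
    congr 2
    ext j k
    simp
  · intro k _ hk
    have : (k : ℕ) ≠ i := fun h => hk (Fin.ext h)
    simp [Pi.single_apply, this]
  · simp

theorem F_zero (w : ℤ → ℂ) (a b : ℤ) (n : ℕ) (r ρ : ℤ) (h : r = ρ + a) :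
    F w a b n r (Pi.single 0 1) = (-1) ^ n * G w a b n ρ := by
  have := F_single w a b n r 0
  simp only [Fin.val_zero, add_zero] at this
  rw [this, G]
  congr 2
  ext j k
  simp only [Matrix.of_apply, Fin.succAbove_zero, Fin.val_succ]
  congr 1
  rw [h]; push_cast; ring

theorem F_top (w : ℤ → ℂ) (a b : ℤ) (n : ℕ) (r : ℤ) :
    F w a b n r (Pi.single n 1) = G w a b n r := by
  have := F_single w a b n r (Fin.last n)
  simp only [Fin.val_last] at this
  rw [this, G, ← two_mul, pow_mul]
  simp

/-- The bordered determinant of size `n + 1` only sees the first `n + 1` entries of its last row. -/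
theorem F_eq_zero (w : ℤ → ℂ) (a b : ℤ) (n : ℕ) (r : ℤ) (v : ℕ → ℂ)
    (hv : ∀ k < n + 1, v k = 0) : F w a b n r v = 0 := by
  rw [F_apply]
  refine Matrix.det_eq_zero_of_row_eq_zero (Fin.last n) fun k => ?_
  simp [hv k k.isLt]

/-! ### The four-term identity -/

theorem linear_expand (T : (ℕ → ℂ) →ₗ[ℂ] ℂ) (N : ℕ)
    (hT : ∀ v : ℕ → ℂ, (∀ k < N, v k = 0) → T v = 0) (v : ℕ → ℂ) :
    T v = ∑ k ∈ Finset.range N, T (Pi.single k 1) * v k := by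
  have h0 : T (v - ∑ k ∈ Finset.range N, v k • Pi.single k (1 : ℂ)) = 0 := by
    apply hT
    intro k hk
    simp [Finset.sum_apply, Pi.single_apply, hk]
  rw [map_sub, sub_eq_zero] at h0
  rw [h0, map_sum]
  exact Finset.sum_congr rfl fun k _ => by rw [map_smul, smul_eq_mul, mul_comm]

theorem shift_row (w : ℤ → ℂ) (a ρ σ : ℤ) (h : ρ = σ + a) :
    shift (row w a ρ) = row w a σ := by
  funext k
  change w _ = w _
  congr 1
  rw [h]; push_cast; ring

/-- If `G_n^r ≠ 0`, a functional on sequences that depends only on the entries `v k` with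
`k ≤ n + 1` is zero as soon as its coefficients of
`v 0` and `v (n + 1)` vanish and it kills the moment rows `r + a + i * b` for `i < n`. -/
theorem eq_zero_of_rows (w : ℤ → ℂ) (a b : ℤ) (n : ℕ) (r : ℤ) (hG : G w a b n r ≠ 0)
    (T : (ℕ → ℂ) →ₗ[ℂ] ℂ) (hT : ∀ v : ℕ → ℂ, (∀ k < n + 2, v k = 0) → T v = 0)
    (h0 : T (Pi.single 0 1) = 0) (htop : T (Pi.single (n + 1) 1) = 0)
    (hrow : ∀ i < n, T (row w a (r + a + b * (i : ℤ))) = 0) : T = 0 := by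
  have hexp : ∀ v, T v = ∑ k : Fin n, T (Pi.single (k + 1 : ℕ) 1) * v (k + 1) := by
    intro v
    rw [linear_expand T (n + 2) hT v, Finset.sum_range_succ, htop, Finset.sum_range_succ', h0,
      Finset.sum_range]
    simp
  have hker : (fun k : Fin n => T (Pi.single (k + 1 : ℕ) 1)) = 0 := by
    refine Matrix.eq_zero_of_mulVec_eq_zero (M := Matrix.of fun j k : Fin n =>
      w (r + b * ((j : ℕ) : ℤ) - a * ((k : ℕ) : ℤ))) hG ?_
    funext j
    rw [Pi.zero_apply, ← hrow j j.isLt, hexp, Matrix.mulVec, dotProduct]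
    refine Finset.sum_congr rfl fun k _ => ?_
    rw [mul_comm]
    congr 1
    change w _ = w _
    congr 1
    push_cast; ring
  refine LinearMap.ext fun v => ?_
  rw [hexp, LinearMap.zero_apply]
  exact Finset.sum_eq_zero fun k _ => by rw [congrFun hker k]; simp

/-- The polynomial `p_r` at `z`: the bordered determinant with last row `(1, z, …, z ^ n)`. -/
noncomputable def p (w : ℤ → ℂ) (a b : ℤ) (n : ℕ) (r : ℤ) (z : ℂ) : ℂ :=
  F w a b n r (fun k => z ^ k)

theorem master (w : ℤ → ℂ) (a b : ℤ) (n : ℕ) (r : ℤ) (hG : G w a b n r ≠ 0) (z : ℂ) :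
    G w a b n r * (G w a b (n + 1) r * p w a b n (r + a + b) z -
        z * G w a b (n + 1) (r + a) * p w a b n (r + b) z) =
      G w a b n (r + b) * (G w a b (n + 1) r * p w a b n (r + a) z -
        z * G w a b (n + 1) (r + a) * p w a b n r z) := by
  let T : (ℕ → ℂ) →ₗ[ℂ] ℂ :=
    G w a b n r • (G w a b (n + 1) r • F w a b n (r + a + b) -
        G w a b (n + 1) (r + a) • (F w a b n (r + b) ∘ₗ shift)) -
      G w a b n (r + b) • (G w a b (n + 1) r • F w a b n (r + a) -
        G w a b (n + 1) (r + a) • (F w a b n r ∘ₗ shift))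
  have hTv : ∀ v, T v =
    G w a b n r * (G w a b (n + 1) r * F w a b n (r + a + b) v -
        G w a b (n + 1) (r + a) * F w a b n (r + b) (shift v)) -
      G w a b n (r + b) * (G w a b (n + 1) r * F w a b n (r + a) v -
        G w a b (n + 1) (r + a) * F w a b n r (shift v)) := fun v => rfl
  have hT0 : T = 0 := by
    refine eq_zero_of_rows w a b n r hG T ?_ ?_ ?_ ?_
    · intro v hv
      have h1 : ∀ ρ, F w a b n ρ v = 0 := fun ρ =>
        F_eq_zero _ _ _ _ _ _ fun k hk => hv k (by omega)
      have h2 : ∀ ρ, F w a b n ρ (shift v) = 0 := fun ρ =>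
        F_eq_zero _ _ _ _ _ _ fun k hk => hv (k + 1) (by omega)
      simp [hTv, h1, h2]
    · have hs : shift (Pi.single 0 1 : ℕ → ℂ) = 0 := by
        funext k
        simp [shift]
      rw [hTv, hs, map_zero, map_zero, F_zero w a b n (r + a + b) (r + b) (by ring),
        F_zero w a b n (r + a) r rfl]
      ring
    · have hs : shift (Pi.single (n + 1) 1 : ℕ → ℂ) = Pi.single n 1 := by
        funext k
        simp [shift, Pi.single_apply]
      have h1 : ∀ ρ, F w a b n ρ (Pi.single (n + 1) 1) = 0 := fun ρ =>
        F_eq_zero _ _ _ _ _ _ fun k hk => Pi.single_eq_of_ne (by omega) _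
      rw [hTv, hs, h1, h1, F_top, F_top]
      ring
    · intro i hi
      rw [hTv, shift_row w a _ (r + b * i) (by ring), F_row w a b n (r + a) _ i hi rfl,
        F_row w a b n r _ i hi rfl]
      rcases i with _ | i
      · rw [F_row_pred w a b n (r + a + b) _ (by push_cast; ring),
          F_row_pred w a b n (r + b) _ (by push_cast; ring)]
        simp only [Nat.cast_zero, mul_zero, add_zero]
        ring
      · rw [F_row w a b n (r + a + b) _ i (by omega) (by push_cast; ring),
          F_row w a b n (r + b) _ i (by omega) (by push_cast; ring)]
        ring
  have hs : shift (fun k => z ^ k) = z • fun k => z ^ k := by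
    funext k
    simp [shift, pow_succ']
  have := hTv (fun k => z ^ k)
  rw [hT0, hs, LinearMap.zero_apply] at this
  simp only [map_smul, smul_eq_mul] at this
  unfold p
  linear_combination -this

/-! ### Transposition and reversal -/

/-- Transposing and reversing the order of the monomials exchanges `(a, b)` with `(b, -a)`. -/
theorem G_reverse (w : ℤ → ℂ) (a b : ℤ) (n : ℕ) (r ρ : ℤ) (h : ρ = r + b * (n - 1)) :
    G w a b n r = ((Equiv.Perm.sign (Fin.revPerm : Equiv.Perm (Fin n)) : ℤ) : ℂ) *
      G w b (-a) n ρ := by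
  rw [G, G, ← Matrix.det_transpose, ← Matrix.det_permute']
  congr 1
  ext j k
  simp only [Matrix.transpose_apply, Matrix.submatrix_apply, Matrix.of_apply, id, Fin.revPerm_apply, Fin.val_rev]
  congr 1
  have := k.isLt
  rw [h]
  push_cast [Nat.cast_sub (show (k : ℕ) + 1 ≤ n by omega)]
  ring

theorem p_reverse (w : ℤ → ℂ) (a b : ℤ) (n : ℕ) (r ρ : ℤ) (z : ℂ) (h : ρ = r + b * n) :
    Matrix.det (Matrix.of fun j k : Fin (n + 1) =>
      if (k : ℕ) < n then w (r + b * ((j : ℕ) : ℤ) - a * ((k : ℕ) : ℤ)) else z ^ (n - (j : ℕ))) =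
    ((Equiv.Perm.sign (Fin.revPerm : Equiv.Perm (Fin (n + 1))) : ℤ) : ℂ) *
      p w b (-a) n ρ z := by
  rw [p, F_apply, ← Matrix.det_transpose, ← Matrix.det_permute']
  congr 1
  ext j k
  simp only [Matrix.transpose_apply, Matrix.submatrix_apply, Matrix.of_apply, id, Fin.revPerm_apply, Fin.val_rev]
  have := k.isLt
  split_ifs
  · congr 1
    rw [h]
    push_cast [Nat.cast_sub (show (k : ℕ) ≤ n by omega), Nat.add_sub_add_right]
    ring
  · congr 1
    omega

/-- The unnormalised reciprocal polynomial of the second kind: the bordered determinant with last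
column `(z ^ n, …, z, 1)`. -/
noncomputable def q (w : ℤ → ℂ) (a b : ℤ) (n : ℕ) (r : ℤ) (z : ℂ) : ℂ :=
  Matrix.det (Matrix.of fun j k : Fin (n + 1) =>
    if (k : ℕ) < n then w (r + b * ((j : ℕ) : ℤ) - a * ((k : ℕ) : ℤ)) else z ^ (n - (j : ℕ)))

/-- The identity `master` for the reciprocal polynomials of the second kind, obtained by
transposition and reversal. -/
theorem master_star (w : ℤ → ℂ) (a b : ℤ) (n : ℕ) (r : ℤ) (hG : G w a b n (r + a + b) ≠ 0)
    (z : ℂ) :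
    G w a b n (r + a + b) * (G w a b (n + 1) (r + a) * q w a b n (r + b) z -
        z * G w a b (n + 1) (r + a + b) * q w a b n r z) =
      G w a b n (r + b) * (G w a b (n + 1) (r + a) * q w a b n (r + a + b) z -
        z * G w a b (n + 1) (r + a + b) * q w a b n (r + a) z) := by
  have e1 : G w a b n (r + a + b) = _ := G_reverse w a b n _ (r + a + b * n) (by ring)
  have e2 : G w a b n (r + b) = _ :=
    G_reverse w a b n _ (r + a + b * n + -a) (by ring)
  have e3 : G w a b (n + 1) (r + a) = _ :=
    G_reverse w a b (n + 1) _ (r + a + b * n) (by push_cast; ring)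
  have e4 : G w a b (n + 1) (r + a + b) = _ :=
    G_reverse w a b (n + 1) _ (r + a + b * n + b) (by push_cast; ring)
  have f1 : q w a b n (r + b) z = _ :=
    p_reverse w a b n _ (r + a + b * n + b + -a) z (by ring)
  have f2 : q w a b n r z = _ := p_reverse w a b n _ (r + a + b * n + -a) z (by ring)
  have f3 : q w a b n (r + a + b) z = _ := p_reverse w a b n _ (r + a + b * n + b) z (by ring)
  have f4 : q w a b n (r + a) z = _ := p_reverse w a b n _ (r + a + b * n) z (by ring)
  have hG' : G w b (-a) n (r + a + b * n) ≠ 0 := by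
    intro h
    rw [e1, h, mul_zero] at hG
    exact hG rfl
  rw [e1, e2, e3, e4, f1, f2, f3, f4]
  generalize ((Equiv.Perm.sign (Fin.revPerm : Equiv.Perm (Fin n)) : ℤ) : ℂ) = ε
  generalize ((Equiv.Perm.sign (Fin.revPerm : Equiv.Perm (Fin (n + 1))) : ℤ) : ℂ) = ε'
  linear_combination ε * ε' ^ 2 * master w b (-a) n (r + a + b * n) hG' z

/-! ### Specialisation to the two families -/

theorem Ddet_eq (w : ℤ → ℂ) (n : ℕ) (r : ℤ) : Ddet w n r = G w 1 2 n r := by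
  simp only [Ddet, G, one_mul]
  rfl

theorem Edet_eq (w : ℤ → ℂ) (n : ℕ) (s : ℤ) : Edet w n s = G w 2 1 n s := by
  simp only [Edet, G, one_mul]
  rfl

theorem Ppoly_eq (w : ℤ → ℂ) (n : ℕ) (r : ℤ) (z : ℂ) :
    Ppoly w n r z = p w 1 2 n r z / G w 1 2 n r := by
  simp only [Ppoly, p, F_apply, Ddet_eq, one_mul]
  rfl

theorem Rpoly_eq (w : ℤ → ℂ) (n : ℕ) (s : ℤ) (z : ℂ) :
    Rpoly w n s z = p w 2 1 n s z / G w 2 1 n s := by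
  simp only [Rpoly, p, F_apply, Edet_eq, one_mul]
  rfl

theorem Qstar_eq (w : ℤ → ℂ) (n : ℕ) (r : ℤ) (z : ℂ) :
    Qstar w n r z = q w 1 2 n r z / G w 1 2 n r := by
  simp only [Qstar, q, Ddet_eq, one_mul]
  rfl

theorem Sstar_eq (w : ℤ → ℂ) (n : ℕ) (s : ℤ) (z : ℂ) :
    Sstar w n s z = q w 2 1 n s z / G w 2 1 n s := by
  simp only [Sstar, q, Edet_eq, one_mul]
  rfl

end OffsetRecurrence

open OffsetRecurrence in
/-- Third-order pure-offset recurrences for the `2j-k` and `j-2k` polynomials. -/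
theorem stmt11 (w : ℤ → ℂ)
    (hD : ∀ (m : ℕ) (ρ : ℤ), Ddet w m ρ ≠ 0)
    (hE : ∀ (m : ℕ) (σ : ℤ), Edet w m σ ≠ 0)
    (n : ℕ) (r s : ℤ) (z : ℂ) :
    ηc w n (r + 1) * Ppoly w n (r + 3) z - z * Ppoly w n (r + 2) z +
        δc w n (r + 1) * Ppoly w n (r + 1) z + z * Ppoly w n r z = 0 ∧
    Qstar w n (r + 3) z - Qstar w n (r + 2) z + βc w n (r + 1) * z * Qstar w n (r + 1) z +
        αc w n (r + 1) * z * Qstar w n r z = 0 ∧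
    ρc w n (s + 2) * Rpoly w n (s + 3) z + κc w n (s + 2) * Rpoly w n (s + 2) z -
        z * Rpoly w n (s + 1) z + z * Rpoly w n s z = 0 ∧
    Sstar w n (s + 3) z + γc w n (s + 2) * z * Sstar w n (s + 2) z - Sstar w n (s + 1) z +
        θc w n (s + 2) * z * Sstar w n s z = 0 := by
  simp only [Ddet_eq] at hD
  simp only [Edet_eq] at hE
  refine ⟨?_, ?_, ?_, ?_⟩
  · have key := master w 1 2 n r (hD n r) z
    rw [show r + 1 + 2 = r + 3 by ring] at key
    simp only [ηc, δc, hnorm, Ppoly_eq, Ddet_eq, show r + 1 + 2 = r + 3 by ring,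
      show r + 1 - 1 = r by ring, show r + 1 + 1 = r + 2 by ring]
    have h1 := hD n r
    have h2 := hD n (r + 1)
    have h3 := hD n (r + 2)
    have h4 := hD n (r + 3)
    have h5 := hD (n + 1) r
    have h6 := hD (n + 1) (r + 1)
    field_simp
    linear_combination key
  · have key := master_star w 1 2 n r (hD n _) z
    rw [show r + 1 + 2 = r + 3 by ring] at key
    simp only [αc, βc, hnorm, Qstar_eq, Ddet_eq, show r + 1 + 2 = r + 3 by ring,
      show r + 1 - 1 = r by ring, show r + 1 + 1 = r + 2 by ring]
    have h1 := hD n r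
    have h2 := hD n (r + 1)
    have h3 := hD n (r + 2)
    have h4 := hD n (r + 3)
    have h5 := hD (n + 1) (r + 3)
    have h6 := hD (n + 1) (r + 1)
    field_simp
    linear_combination -key
  · have key := master w 2 1 n s (hE n s) z
    rw [show s + 2 + 1 = s + 3 by ring] at key
    simp only [ρc, κc, gnorm, Rpoly_eq, Edet_eq, show s + 2 + 1 = s + 3 by ring,
      show s + 2 - 2 = s by ring, show s + 2 - 1 = s + 1 by ring]
    have h1 := hE n s
    have h2 := hE n (s + 1)
    have h3 := hE n (s + 2)
    have h4 := hE n (s + 3)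
    have h5 := hE (n + 1) s
    have h6 := hE (n + 1) (s + 2)
    field_simp
    linear_combination key
  · have key := master_star w 2 1 n s (hE n _) z
    rw [show s + 2 + 1 = s + 3 by ring] at key
    simp only [θc, γc, gnorm, Sstar_eq, Edet_eq, show s + 2 + 1 = s + 3 by ring,
      show s + 2 - 2 = s by ring, show s + 2 - 1 = s + 1 by ring]
    have h1 := hE n s
    have h2 := hE n (s + 1)
    have h3 := hE n (s + 2)
    have h4 := hE n (s + 3)
    have h5 := hE (n + 1) (s + 3)
    have h6 := hE (n + 1) (s + 2)
    field_simp
    linear_combination -key
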